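/- Let (C,Δ,ε) be a comonoid in M and let X be an object of M. The following are equivalent: (i) there exists a morphism ρ : C⊗X → (C⊗X)⊗C making C⊗X a C-bicomodule whose left C-coaction is Δ⊗X, i.e. ρ satisfies (id_{C⊗X}⊗ε)∘ρ = id_{C⊗X}, (ρ⊗C)∘ρ = ((C⊗X)⊗Δ)∘ρ, and ((Δ⊗X)⊗C)∘ρ = (C⊗ρ)∘(Δ⊗X); (ii) there exists a morphism 𝔵 : C⊗X → X⊗C satisfying (X⊗Δ)∘𝔵 = (𝔵⊗C)∘(C⊗𝔵)∘(Δ⊗X) and (X⊗ε)∘𝔵 = ε⊗X. (The passage (ii)⇒(i) is given by ρ = (C⊗𝔵)∘(Δ⊗X), and (i)⇒(ii) by 𝔵 = (ε⊗X⊗C)∘ρ.) -/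

import Mathlib

open CategoryTheory MonoidalCategory

/-!
The comodule `C ⊗ Y` with coaction `Δ ▷ Y` is cofree on `Y`: for a comodule `A` with coaction `δ`,
a comodule morphism `f : A ⟶ C ⊗ Y` corresponds to the arbitrary morphism `f ≫ ε ▷ Y : A ⟶ Y`, and
`g : A ⟶ Y` to `δ ≫ C ◁ g`. A right coaction `ρ` on `C ⊗ X` compatible with `Δ ▷ X` is a comodule
morphism into the comodule cofree on `X ⊗ C`, so it amounts to a morphism `x : C ⊗ X ⟶ X ⊗ C`. Both
sides of the counit law and of the coassociativity law for `ρ` are comodule morphisms into cofree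
comodules as well, and the morphisms corresponding to them are the two sides of the two equations
for `x`.
-/

section CofreeComodule

open scoped ComonObj

variable {M : Type*} [Category M] [MonoidalCategory M] {C A B Y Z : M}

/-- A morphism of left `C`-comodules, for the coactions `δ` on `A` and `δ'` on `B`. -/
def IsComoduleHom (δ : A ⟶ C ⊗ A) (δ' : B ⟶ C ⊗ B) (f : A ⟶ B) : Prop :=
  f ≫ δ' = δ ≫ C ◁ f

/-- The morphism `A ⟶ C ⊗ Y` into the cofree comodule on `Y` that `g : A ⟶ Y` induces, for a
coaction `δ` on `A`. -/
def coextend (δ : A ⟶ C ⊗ A) (g : A ⟶ Y) : A ⟶ C ⊗ Y :=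
  δ ≫ C ◁ g

theorem coextend_comp_whiskerLeft (δ : A ⟶ C ⊗ A) (g : A ⟶ Y) (h : Y ⟶ Z) :
    coextend δ g ≫ C ◁ h = coextend δ (g ≫ h) := by
  simp only [coextend, Category.assoc, MonoidalCategory.whiskerLeft_comp]

theorem IsComoduleHom.comp_coextend {δ : A ⟶ C ⊗ A} {δ' : B ⟶ C ⊗ B} {f : A ⟶ B}
    (hf : IsComoduleHom δ δ' f) (g : B ⟶ Y) : f ≫ coextend δ' g = coextend δ (f ≫ g) := by
  rw [coextend, reassoc_of% hf, ← MonoidalCategory.whiskerLeft_comp, coextend]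

variable [ComonObj C]

/-- A coassociative and counital left coaction `δ` of the comonoid `C` on `A`. -/
structure IsLeftCoaction (δ : A ⟶ C ⊗ A) : Prop where
  counit : δ ≫ ε ▷ A = (λ_ A).inv
  coassoc : δ ≫ Δ ▷ A ≫ (α_ C C A).hom = δ ≫ C ◁ δ

variable (C Y) in
/-- The coaction `Δ ▷ Y` on the cofree left comodule `C ⊗ Y`. -/
def cofreeCoaction : C ⊗ Y ⟶ C ⊗ (C ⊗ Y) :=
  Δ ▷ Y ≫ (α_ C C Y).hom

variable (C Y) in
/-- The universal morphism `ε ▷ Y` from the cofree left comodule `C ⊗ Y` to `Y`. -/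
def cofreeCounit : C ⊗ Y ⟶ Y :=
  ε ▷ Y ≫ (λ_ Y).hom

theorem isLeftCoaction_cofreeCoaction : IsLeftCoaction (cofreeCoaction C Y) where
  counit := by
    calc cofreeCoaction C Y ≫ ε ▷ (C ⊗ Y)
        = (Δ[C] ≫ ε ▷ C) ▷ Y ≫ (α_ (𝟙_ M) C Y).hom := by rw [cofreeCoaction]; monoidal
      _ = (λ_ (C ⊗ Y)).inv := by rw [ComonObj.counit_comul]; monoidal
  coassoc := by
    calc cofreeCoaction C Y ≫ Δ ▷ (C ⊗ Y) ≫ (α_ C C (C ⊗ Y)).hom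
        = (Δ[C] ≫ Δ ▷ C ≫ (α_ C C C).hom) ▷ Y ≫ (α_ C (C ⊗ C) Y).hom ≫ C ◁ (α_ C C Y).hom := by
          rw [cofreeCoaction]; monoidal
      _ = cofreeCoaction C Y ≫ C ◁ cofreeCoaction C Y := by
          rw [← ComonObj.comul_assoc, cofreeCoaction]; monoidal

theorem coextend_cofreeCounit : coextend (cofreeCoaction C Y) (cofreeCounit C Y) = 𝟙 (C ⊗ Y) := by
  calc coextend (cofreeCoaction C Y) (cofreeCounit C Y)
      = (Δ[C] ≫ C ◁ ε) ▷ Y ≫ (α_ C (𝟙_ M) Y).hom ≫ C ◁ (λ_ Y).hom := by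
        rw [coextend, cofreeCoaction, cofreeCounit]; monoidal
    _ = 𝟙 (C ⊗ Y) := by rw [ComonObj.comul_counit]; monoidal

theorem IsComoduleHom.coextend_comp_cofreeCounit {δ : A ⟶ C ⊗ A} {f : A ⟶ C ⊗ Y}
    (hf : IsComoduleHom δ (cofreeCoaction C Y) f) : coextend δ (f ≫ cofreeCounit C Y) = f := by
  rw [← hf.comp_coextend, coextend_cofreeCounit, Category.comp_id]

namespace IsLeftCoaction

variable {δ : A ⟶ C ⊗ A}

theorem isComoduleHom_coextend (hδ : IsLeftCoaction δ) (g : A ⟶ Y) :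
    IsComoduleHom δ (cofreeCoaction C Y) (coextend δ g) := by
  calc coextend δ g ≫ cofreeCoaction C Y
      = δ ≫ (C ◁ g ≫ Δ ▷ Y) ≫ (α_ C C Y).hom := by
        simp only [coextend, cofreeCoaction, Category.assoc]
    _ = (δ ≫ Δ ▷ A ≫ (α_ C C A).hom) ≫ C ◁ C ◁ g := by rw [whisker_exchange]; monoidal
    _ = δ ≫ C ◁ coextend δ g := by rw [hδ.coassoc, coextend]; monoidal

theorem coextend_comp_cofreeCounit (hδ : IsLeftCoaction δ) (g : A ⟶ Y) :
    coextend δ g ≫ cofreeCounit C Y = g := by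
  calc coextend δ g ≫ cofreeCounit C Y
      = δ ≫ (C ◁ g ≫ ε ▷ Y) ≫ (λ_ Y).hom := by
        simp only [coextend, cofreeCounit, Category.assoc]
    _ = (δ ≫ ε ▷ A) ≫ (λ_ A).hom ≫ g := by rw [whisker_exchange]; monoidal
    _ = g := by rw [hδ.counit, Iso.inv_hom_id_assoc]

theorem coextend_injective (hδ : IsLeftCoaction δ) :
    Function.Injective (coextend δ : (A ⟶ Y) → (A ⟶ C ⊗ Y)) :=
  Function.LeftInverse.injective (g := (· ≫ cofreeCounit C Y)) hδ.coextend_comp_cofreeCounit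

end IsLeftCoaction

end CofreeComodule

section Bicomodule

open scoped ComonObj

variable {M : Type*} [Category M] [MonoidalCategory M] {C D X : M} [ComonObj C]

/-- The right coaction `(C ⊗ x) ∘ (Δ ⊗ X)` of `D` on `C ⊗ X` induced by `x : C ⊗ X ⟶ X ⊗ D`. -/
def inducedCoaction (x : C ⊗ X ⟶ X ⊗ D) : C ⊗ X ⟶ (C ⊗ X) ⊗ D :=
  coextend (cofreeCoaction C X) x ≫ (α_ C X D).inv

theorem inducedCoaction_comp_associator (x : C ⊗ X ⟶ X ⊗ D) :
    inducedCoaction x ≫ (α_ C X D).hom = coextend (cofreeCoaction C X) x := by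
  rw [inducedCoaction, Category.assoc, Iso.inv_hom_id, Category.comp_id]

theorem isComoduleHom_comp_associator_iff (ρ : C ⊗ X ⟶ (C ⊗ X) ⊗ D) :
    IsComoduleHom (cofreeCoaction C X) (cofreeCoaction C (X ⊗ D)) (ρ ≫ (α_ C X D).hom) ↔
      ρ ≫ ((Δ ▷ X) ▷ D) =
        (Δ ▷ X) ≫ (α_ C C X).hom ≫ (C ◁ ρ) ≫ (α_ C (C ⊗ X) D).inv ≫ ((α_ C C X).inv ▷ D) := by
  let reassociate := (α_ C C X).hom ▷ D ≫ (α_ C (C ⊗ X) D).hom ≫ C ◁ (α_ C X D).hom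
  have left_eq : (ρ ≫ (α_ C X D).hom) ≫ cofreeCoaction C (X ⊗ D) =
      (ρ ≫ ((Δ ▷ X) ▷ D)) ≫ reassociate := by
    simp only [cofreeCoaction, reassociate]; monoidal
  have right_eq : cofreeCoaction C X ≫ C ◁ (ρ ≫ (α_ C X D).hom) =
      ((Δ ▷ X) ≫ (α_ C C X).hom ≫ (C ◁ ρ) ≫ (α_ C (C ⊗ X) D).inv ≫ ((α_ C C X).inv ▷ D)) ≫
        reassociate := by
    simp only [cofreeCoaction, reassociate]; monoidal
  rw [IsComoduleHom, left_eq, right_eq, cancel_mono]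

theorem inducedCoaction_comp_whiskerRight (x : C ⊗ X ⟶ X ⊗ D) :
    inducedCoaction x ≫ inducedCoaction x ▷ D ≫ (α_ (C ⊗ X) D D).hom ≫ (α_ C X (D ⊗ D)).hom =
      coextend (cofreeCoaction C X)
        (coextend (cofreeCoaction C X) x ≫ (α_ C X D).inv ≫ x ▷ D ≫ (α_ X D D).hom) := by
  calc inducedCoaction x ≫ inducedCoaction x ▷ D ≫ (α_ (C ⊗ X) D D).hom ≫ (α_ C X (D ⊗ D)).hom
      = coextend (cofreeCoaction C X) x ≫
          coextend (cofreeCoaction C (X ⊗ D)) ((α_ C X D).inv ≫ x ▷ D ≫ (α_ X D D).hom) := by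
        simp only [inducedCoaction, coextend, cofreeCoaction]; monoidal
    _ = _ := (isLeftCoaction_cofreeCoaction.isComoduleHom_coextend x).comp_coextend _

variable [ComonObj D]

theorem inducedCoaction_comp_comul (x : C ⊗ X ⟶ X ⊗ D) :
    inducedCoaction x ≫ (C ⊗ X) ◁ Δ ≫ (α_ C X (D ⊗ D)).hom =
      coextend (cofreeCoaction C X) (x ≫ X ◁ Δ) := by
  rw [← coextend_comp_whiskerLeft, inducedCoaction]; monoidal

theorem inducedCoaction_comp_counit (x : C ⊗ X ⟶ X ⊗ D) :
    inducedCoaction x ≫ (C ⊗ X) ◁ ε ≫ (ρ_ (C ⊗ X)).hom =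
      coextend (cofreeCoaction C X) (x ≫ X ◁ ε ≫ (ρ_ X).hom) := by
  rw [← coextend_comp_whiskerLeft, inducedCoaction]; monoidal

theorem inducedCoaction_counital_iff (x : C ⊗ X ⟶ X ⊗ D) :
    inducedCoaction x ≫ (C ⊗ X) ◁ ε = (ρ_ (C ⊗ X)).inv ↔
      x ≫ X ◁ ε ≫ (ρ_ X).hom = cofreeCounit C X := by
  rw [← Iso.comp_hom_eq_id, Category.assoc, inducedCoaction_comp_counit, ← coextend_cofreeCounit,
    isLeftCoaction_cofreeCoaction.coextend_injective.eq_iff]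

theorem inducedCoaction_coassociative_iff (x : C ⊗ X ⟶ X ⊗ D) :
    inducedCoaction x ≫ inducedCoaction x ▷ D ≫ (α_ (C ⊗ X) D D).hom =
        inducedCoaction x ≫ (C ⊗ X) ◁ Δ ↔
      x ≫ X ◁ Δ = coextend (cofreeCoaction C X) x ≫ (α_ C X D).inv ≫ x ▷ D ≫ (α_ X D D).hom := by
  rw [← cancel_mono (α_ C X (D ⊗ D)).hom]
  simp only [Category.assoc]
  rw [inducedCoaction_comp_whiskerRight, inducedCoaction_comp_comul,
    isLeftCoaction_cofreeCoaction.coextend_injective.eq_iff, eq_comm]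

/-- The right coaction `ρ` of `D` makes the cofree left `C`-comodule `C ⊗ X` a
`C`-`D`-bicomodule. -/
def IsCofreeBicomodule (ρ : C ⊗ X ⟶ (C ⊗ X) ⊗ D) : Prop :=
  ρ ≫ ((C ⊗ X) ◁ ε) = (ρ_ (C ⊗ X)).inv ∧
  ρ ≫ (ρ ▷ D) ≫ (α_ (C ⊗ X) D D).hom = ρ ≫ ((C ⊗ X) ◁ Δ) ∧
  ρ ≫ ((Δ ▷ X) ▷ D) =
    (Δ ▷ X) ≫ (α_ C C X).hom ≫ (C ◁ ρ) ≫ (α_ C (C ⊗ X) D).inv ≫ ((α_ C C X).inv ▷ D)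

/-- The morphism `x`, which moves `X` past the comonoids `C` and `D`, is compatible with their
comultiplications and counits. -/
def IsEntwining (x : C ⊗ X ⟶ X ⊗ D) : Prop :=
  x ≫ (X ◁ Δ) =
    (Δ ▷ X) ≫ (α_ C C X).hom ≫ (C ◁ x) ≫ (α_ C X D).inv ≫ (x ▷ D) ≫ (α_ X D D).hom ∧
  x ≫ (X ◁ ε) ≫ (ρ_ X).hom = (ε ▷ X) ≫ (λ_ X).hom

theorem isCofreeBicomodule_inducedCoaction_iff (x : C ⊗ X ⟶ X ⊗ D) :
    IsCofreeBicomodule (inducedCoaction x) ↔ IsEntwining x := by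
  have isComoduleHom : IsComoduleHom (cofreeCoaction C X) (cofreeCoaction C (X ⊗ D))
      (inducedCoaction x ≫ (α_ C X D).hom) := by
    rw [inducedCoaction_comp_associator]
    exact isLeftCoaction_cofreeCoaction.isComoduleHom_coextend x
  rw [IsCofreeBicomodule, inducedCoaction_counital_iff, inducedCoaction_coassociative_iff,
    and_iff_left ((isComoduleHom_comp_associator_iff _).1 isComoduleHom), and_comm, IsEntwining]
  simp only [coextend, cofreeCoaction, cofreeCounit, Category.assoc]

theorem IsCofreeBicomodule.inducedCoaction_eq {ρ : C ⊗ X ⟶ (C ⊗ X) ⊗ D}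
    (hρ : IsCofreeBicomodule ρ) :
    inducedCoaction ((ρ ≫ (α_ C X D).hom) ≫ cofreeCounit C (X ⊗ D)) = ρ := by
  have isComoduleHom := (isComoduleHom_comp_associator_iff ρ).2 hρ.2.2
  rw [inducedCoaction, isComoduleHom.coextend_comp_cofreeCounit, Category.assoc, Iso.hom_inv_id,
    Category.comp_id]

variable (C D X) in
/-- Compatible right `D`-coactions on the cofree left comodule `C ⊗ X` are the same as
entwinings. -/
def bicomoduleEquivEntwining :
    {ρ : C ⊗ X ⟶ (C ⊗ X) ⊗ D // IsCofreeBicomodule ρ} ≃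
      {x : C ⊗ X ⟶ X ⊗ D // IsEntwining x} where
  toFun ρ := ⟨(ρ.1 ≫ (α_ C X D).hom) ≫ cofreeCounit C (X ⊗ D),
    (isCofreeBicomodule_inducedCoaction_iff _).1 (ρ.2.inducedCoaction_eq.symm ▸ ρ.2)⟩
  invFun x := ⟨inducedCoaction x.1, (isCofreeBicomodule_inducedCoaction_iff x.1).2 x.2⟩
  left_inv ρ := Subtype.ext ρ.2.inducedCoaction_eq
  right_inv x := by
    ext
    dsimp only
    rw [inducedCoaction_comp_associator,
      isLeftCoaction_cofreeCoaction.coextend_comp_cofreeCounit]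

end Bicomodule

theorem stmt_0_general {M : Type*} [Category M] [MonoidalCategory M]
    (C D X : M) [ComonObj C] [ComonObj D] :
    (∃ ρ : C ⊗ X ⟶ (C ⊗ X) ⊗ D, IsCofreeBicomodule ρ) ↔
      ∃ x : C ⊗ X ⟶ X ⊗ D, IsEntwining x := by
  rw [← nonempty_subtype, ← nonempty_subtype]
  exact (bicomoduleEquivEntwining C D X).nonempty_congr

/-- Lemma 1.2 of "Compatibility condition between ring and coring":
for a comonoid `(C, Δ, ε)` in a monoidal category and an object `X`, the existence of a
`C`-bicomodule structure on `C ⊗ X` whose left coaction is `Δ ▷ X` is equivalent to the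
existence of an entwining `C ⊗ X ⟶ X ⊗ C`. -/
theorem stmt_0 {M : Type*} [Category M] [MonoidalCategory M]
    (C X : M) (Δ : C ⟶ C ⊗ C) (ε : C ⟶ 𝟙_ M)
    (hcounit_l : Δ ≫ (ε ▷ C) = (λ_ C).inv)
    (hcounit_r : Δ ≫ (C ◁ ε) = (ρ_ C).inv)
    (hcoassoc : Δ ≫ (Δ ▷ C) ≫ (α_ C C C).hom = Δ ≫ (C ◁ Δ)) :
    (∃ ρ : C ⊗ X ⟶ (C ⊗ X) ⊗ C,
        ρ ≫ ((C ⊗ X) ◁ ε) = (ρ_ (C ⊗ X)).inv ∧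
        ρ ≫ (ρ ▷ C) ≫ (α_ (C ⊗ X) C C).hom = ρ ≫ ((C ⊗ X) ◁ Δ) ∧
        ρ ≫ ((Δ ▷ X) ▷ C) =
          (Δ ▷ X) ≫ (α_ C C X).hom ≫ (C ◁ ρ) ≫ (α_ C (C ⊗ X) C).inv ≫
            ((α_ C C X).inv ▷ C)) ↔
    (∃ x : C ⊗ X ⟶ X ⊗ C,
        x ≫ (X ◁ Δ) =
          (Δ ▷ X) ≫ (α_ C C X).hom ≫ (C ◁ x) ≫ (α_ C X C).inv ≫
            (x ▷ C) ≫ (α_ X C C).hom ∧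
        x ≫ (X ◁ ε) ≫ (ρ_ X).hom = (ε ▷ X) ≫ (λ_ X).hom) :=
  letI : ComonObj C := ⟨ε, Δ, hcounit_l, hcounit_r, hcoassoc.symm⟩
  stmt_0_general C C X
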